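/- The 44-point origin-symmetric set on the unit sphere S^5 in E^6 obtained by normalizing (dividing by √6) all coordinate permutations and antipodes of the vectors (√6,0,0,0,0,0), (1,1,1,1,1,1), and (1,1,1,1,-1,-1) has covering radius arccos(2/3), which is strictly less than arccos(√(5/12)). -/

import Mathlib

open RealInnerProductSpace

/-- The caps of angular radius `r` centered at points of `A` cover the unit sphere. -/
def Covers {n : ℕ} (A : Set (EuclideanSpace ℝ (Fin n))) (r : ℝ) : Prop :=
  ∀ x ∈ Metric.sphere (0 : EuclideanSpace ℝ (Fin n)) 1, ∃ a ∈ A, Real.arccos ⟪x, a⟫ ≤ r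

/-- The covering radius of `A`. -/
noncomputable def covRadius {n : ℕ} (A : Set (EuclideanSpace ℝ (Fin n))) : ℝ :=
  sInf {r : ℝ | 0 < r ∧ Covers A r}

/-- The three generating vectors `(√6,0,0,0,0,0)`, `(1,1,1,1,1,1)`, `(1,1,1,1,-1,-1)`. -/
noncomputable def gen6 : Fin 3 → (Fin 6 → ℝ) :=
  ![fun i => if i = 0 then Real.sqrt 6 else 0, fun _ => 1, fun i => if i.val < 4 then 1 else -1]

/-- The 44-point configuration on `S⁵`: all coordinate permutations and antipodes of the
generating vectors, normalized by `√6`. -/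
noncomputable def A6 : Set (EuclideanSpace ℝ (Fin 6)) :=
  {x | ∃ k : Fin 3, ∃ σ : Equiv.Perm (Fin 6), ∃ ε : ℝ, (ε = 1 ∨ ε = -1) ∧
    ∀ i, x i = (Real.sqrt 6)⁻¹ * (ε * gen6 k (σ i))}

/-! The configuration is the union of a regular cross-polytope and a demihypercube. Let `m` be the
largest inner product of a vector `x` with its points. The cross-polytope gives `|xᵢ| ≤ m`.
The demihypercube gives `∑ |xᵢ| - 2 |xⱼ| ≤ √6 m` for every `j`, since spoiling a single sign in the
optimal sign vector makes its parity even. These inequalities force `‖x‖ ≤ 3/2 m`, so caps of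
radius `arccos (2/3)` cover the sphere. No smaller radius suffices, because a normalized sign
vector of odd parity makes no larger inner product than `2/3` with any of the points. -/

section CoveringRadius

variable {n : ℕ} {A : Set (EuclideanSpace ℝ (Fin n))} {c : ℝ}

theorem covers_arccos
    (h : ∀ x ∈ Metric.sphere (0 : EuclideanSpace ℝ (Fin n)) 1, ∃ a ∈ A, c ≤ ⟪x, a⟫) :
    Covers A (Real.arccos c) := fun x hx ↦
  let ⟨a, ha, hxa⟩ := h x hx
  ⟨a, ha, Real.arccos_le_arccos hxa⟩

theorem arccos_le_of_covers {r : ℝ} {x : EuclideanSpace ℝ (Fin n)}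
    (hx : x ∈ Metric.sphere (0 : EuclideanSpace ℝ (Fin n)) 1) (hxA : ∀ a ∈ A, ⟪x, a⟫ ≤ c)
    (hr : Covers A r) : Real.arccos c ≤ r :=
  let ⟨a, ha, har⟩ := hr x hx
  (Real.arccos_le_arccos (hxA a ha)).trans har

theorem covRadius_eq_arccos (hc : c < 1)
    (hA : ∀ x ∈ Metric.sphere (0 : EuclideanSpace ℝ (Fin n)) 1, ∃ a ∈ A, c ≤ ⟪x, a⟫)
    {x : EuclideanSpace ℝ (Fin n)} (hx : x ∈ Metric.sphere (0 : EuclideanSpace ℝ (Fin n)) 1)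
    (hxA : ∀ a ∈ A, ⟪x, a⟫ ≤ c) : covRadius A = Real.arccos c :=
  IsLeast.csInf_eq ⟨⟨Real.arccos_pos.mpr hc, covers_arccos hA⟩,
    fun _ hr ↦ arccos_le_of_covers hx hxA hr.2⟩

end CoveringRadius

section SignVectors

variable {ι : Type*} [Fintype ι]

theorem sum_units_le_card_sub_two {s : ι → ℤˣ} (hs : s ≠ 1) :
    ∑ i, ((s i : ℤ) : ℝ) ≤ Fintype.card ι - 2 := by
  classical
  obtain ⟨j, hj⟩ := Function.ne_iff.mp hs
  have hsj : s j = -1 := (Int.units_eq_one_or _).resolve_left hj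
  have hle (i : ι) : ((s i : ℤ) : ℝ) ≤ 1 - if i = j then 2 else 0 := by
    split_ifs with hi
    · norm_num [hi, hsj]
    · simpa [abs_unit_intCast] using le_abs_self ((s i : ℤ) : ℝ)
  calc ∑ i, ((s i : ℤ) : ℝ) ≤ ∑ i, (1 - if i = j then 2 else 0) :=
        Finset.sum_le_sum fun i _ ↦ hle i
    _ = Fintype.card ι - 2 := by simp [Finset.sum_sub_distrib]

theorem exists_prod_eq_one_sum_mul_ge (x : ι → ℝ) (j : ι) :
    ∃ s : ι → ℤˣ, ∏ i, s i = 1 ∧ ∑ i, |x i| - 2 * |x j| ≤ ∑ i, ((s i : ℤ) : ℝ) * x i := by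
  classical
  let σ : ι → ℤˣ := fun i ↦ if x i < 0 then -1 else 1
  have hσ (i : ι) : ((σ i : ℤ) : ℝ) * x i = |x i| := by
    by_cases h : x i < 0
    · simp [σ, h, abs_of_neg h]
    · simp [σ, h, abs_of_nonneg (not_lt.mp h)]
  -- Multiplying the sign at `j` by the parity of `σ` makes the parity even.
  let s : ι → ℤˣ := fun i ↦ σ i * if i = j then ∏ k, σ k else 1
  have hle (i : ι) : |x i| - (if i = j then 2 * |x j| else 0) ≤ ((s i : ℤ) : ℝ) * x i := by
    by_cases hi : i = j
    · have habs : |((s i : ℤ) : ℝ) * x i| = |x i| := by rw [abs_mul, abs_unit_intCast, one_mul]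
      have hneg : -|x i| ≤ ((s i : ℤ) : ℝ) * x i := habs ▸ neg_abs_le _
      rw [if_pos hi, ← hi]
      linarith
    · simp [s, hi, hσ]
  have hs : ∏ i, s i = 1 := by
    simp only [s, Finset.prod_mul_distrib]
    simp
  refine ⟨s, hs, ?_⟩
  calc ∑ i, |x i| - 2 * |x j| = ∑ i, (|x i| - if i = j then 2 * |x j| else 0) := by
        simp [Finset.sum_sub_distrib]
    _ ≤ ∑ i, ((s i : ℤ) : ℝ) * x i := Finset.sum_le_sum fun i _ ↦ hle i

theorem two_mul_ncard_prod_eq_one [Nonempty ι] :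
    2 * {s : ι → ℤˣ | ∏ i, s i = 1}.ncard = 2 ^ Fintype.card ι := by
  classical
  let parity : (ι → ℤˣ) →* ℤˣ :=
    { toFun s := ∏ i, s i
      map_one' := by simp
      map_mul' s t := Finset.prod_mul_distrib }
  have hsurj : Function.Surjective parity := fun u ↦
    ⟨Pi.mulSingle (Classical.arbitrary ι) u, by simp [parity]⟩
  have hindex : parity.ker.index = 2 := by
    rw [Subgroup.index_ker, MonoidHom.range_eq_top.mpr hsurj]
    simp
  calc 2 * {s : ι → ℤˣ | ∏ i, s i = 1}.ncard = Nat.card parity.ker * parity.ker.index := by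
        rw [hindex, mul_comm]
        rfl
    _ = Nat.card (ι → ℤˣ) := parity.ker.card_mul_index
    _ = 2 ^ Fintype.card ι := by simp

theorem prod_units_eq_neg_one_pow (s : ι → ℤˣ) :
    ∏ i, s i = (-1) ^ Finset.card {i | s i = -1} := by
  have h (i : ι) : s i = if s i = -1 then -1 else 1 := by
    rcases Int.units_eq_one_or (s i) with h | h <;> simp [h]
  rw [Finset.prod_congr rfl fun i _ ↦ h i, Finset.prod_ite]
  simp

theorem exists_perm_comp_eq {s t : ι → ℤˣ}
    (h : Finset.card {i | s i = -1} = Finset.card {i | t i = -1}) :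
    ∃ σ : Equiv.Perm ι, s = t ∘ σ := by
  classical
  let e : {i // s i = -1} ≃ {i // t i = -1} :=
    Fintype.equivOfCardEq (by simpa only [Fintype.card_subtype] using h)
  refine ⟨e.extendSubtype, funext fun i ↦ ?_⟩
  by_cases hi : s i = -1
  · rw [hi, Function.comp_apply, e.extendSubtype_mem i hi]
  · rw [Function.comp_apply, (Int.units_eq_one_or _).resolve_right hi,
      (Int.units_eq_one_or _).resolve_right (e.extendSubtype_not_mem i hi)]

end SignVectors

section Polytopes

variable {ι : Type*}

/-- The vertices `±eᵢ` of the cross-polytope, with the signs encoded as units of `ℤ`. -/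
def crossPolytope (ι : Type*) [DecidableEq ι] : Set (EuclideanSpace ℝ ι) :=
  Set.range fun p : ι × ℤˣ ↦ EuclideanSpace.single p.1 ((p.2 : ℤ) : ℝ)

theorem single_units_injective [DecidableEq ι] : Function.Injective
    fun p : ι × ℤˣ ↦ (EuclideanSpace.single p.1 ((p.2 : ℤ) : ℝ) : EuclideanSpace ℝ ι) := by
  rintro ⟨i, u⟩ ⟨j, v⟩ h
  have hi := congrArg (fun x : EuclideanSpace ℝ ι ↦ x i) h
  obtain rfl : i = j := by
    by_contra hij
    simp [hij] at hi
  simp only [PiLp.single_apply, if_true, Int.cast_inj] at hi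
  rw [Units.ext hi]

variable [Fintype ι]

/-- The vertex of the hypercube inscribed in the unit sphere with the given coordinate signs. -/
noncomputable def unitSignVector (s : ι → ℤˣ) : EuclideanSpace ℝ ι :=
  WithLp.toLp 2 fun i ↦ (√(Fintype.card ι))⁻¹ * ((s i : ℤ) : ℝ)

/-- The vertices of the demihypercube inscribed in the unit sphere: the normalized sign vectors
with an even number of minus signs. -/
def demihypercube (ι : Type*) [Fintype ι] : Set (EuclideanSpace ℝ ι) :=
  unitSignVector '' {s : ι → ℤˣ | ∏ i, s i = 1}

@[simp]
theorem unitSignVector_apply (s : ι → ℤˣ) (i : ι) :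
    unitSignVector s i = (√(Fintype.card ι))⁻¹ * ((s i : ℤ) : ℝ) := rfl

theorem inner_unitSignVector (x : EuclideanSpace ℝ ι) (s : ι → ℤˣ) :
    ⟪x, unitSignVector s⟫ = (√(Fintype.card ι))⁻¹ * ∑ i, ((s i : ℤ) : ℝ) * x i := by
  simp [PiLp.inner_apply, Finset.mul_sum, mul_assoc]

theorem inner_unitSignVector_unitSignVector (s t : ι → ℤˣ) :
    ⟪unitSignVector s, unitSignVector t⟫ =
      (Fintype.card ι : ℝ)⁻¹ * ∑ i, (((s * t) i : ℤ) : ℝ) := by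
  have hsqrt : (√(Fintype.card ι))⁻¹ * (√(Fintype.card ι))⁻¹ = (Fintype.card ι : ℝ)⁻¹ := by
    rw [← mul_inv, Real.mul_self_sqrt (Nat.cast_nonneg _)]
  rw [inner_unitSignVector, ← hsqrt, mul_assoc]
  congr 1
  rw [Finset.mul_sum]
  refine Finset.sum_congr rfl fun i _ ↦ ?_
  simp only [unitSignVector_apply, Pi.mul_apply, Units.val_mul, Int.cast_mul]
  ring

theorem inner_unitSignVector_le {s t : ι → ℤˣ} (h : s ≠ t) :
    ⟪unitSignVector s, unitSignVector t⟫ ≤ 1 - 2 / (Fintype.card ι : ℝ) := by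
  obtain ⟨j, -⟩ := Function.ne_iff.mp h
  have hcard : (0 : ℝ) < Fintype.card ι := Nat.cast_pos.mpr (Fintype.card_pos_iff.mpr ⟨j⟩)
  have hst : s * t ≠ 1 := fun hst ↦ h <| funext fun i ↦ by
    simpa using! eq_inv_of_mul_eq_one_left (congrFun hst i)
  rw [inner_unitSignVector_unitSignVector, inv_mul_le_iff₀ hcard]
  calc ∑ i, (((s * t) i : ℤ) : ℝ) ≤ Fintype.card ι - 2 := sum_units_le_card_sub_two hst
    _ = Fintype.card ι * (1 - 2 / (Fintype.card ι : ℝ)) := by field_simp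

theorem norm_unitSignVector [Nonempty ι] (s : ι → ℤˣ) : ‖unitSignVector s‖ = 1 := by
  have hs : s * s = 1 := funext fun i ↦ Int.units_mul_self (s i)
  rw [norm_eq_sqrt_real_inner, inner_unitSignVector_unitSignVector, hs]
  simp

theorem unitSignVector_injective : Function.Injective (unitSignVector (ι := ι)) := by
  refine fun s t h ↦ funext fun i ↦ ?_
  have hcard : (√(Fintype.card ι))⁻¹ ≠ 0 := by
    simp [Fintype.card_ne_zero, (⟨i⟩ : Nonempty ι)]
  have hi : unitSignVector s i = unitSignVector t i := by rw [h]
  exact Units.ext (by exact_mod_cast mul_left_cancel₀ hcard hi)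

theorem two_mul_ncard_demihypercube [Nonempty ι] :
    2 * (demihypercube ι).ncard = 2 ^ Fintype.card ι := by
  rw [demihypercube, Set.ncard_image_of_injective _ unitSignVector_injective,
    two_mul_ncard_prod_eq_one]

theorem demihypercube_subset_sphere [Nonempty ι] :
    demihypercube ι ⊆ Metric.sphere (0 : EuclideanSpace ℝ ι) 1 := by
  rintro _ ⟨s, -, rfl⟩
  simp [norm_unitSignVector]

theorem sum_abs_sub_le_of_inner_demihypercube_le {x : EuclideanSpace ℝ ι} {m : ℝ}
    (h : ∀ a ∈ demihypercube ι, ⟪x, a⟫ ≤ m) (j : ι) :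
    ∑ i, |x i| - 2 * |x j| ≤ √(Fintype.card ι) * m := by
  obtain ⟨s, hs, hsum⟩ := exists_prod_eq_one_sum_mul_ge x j
  have hcard : 0 < √(Fintype.card ι : ℝ) :=
    Real.sqrt_pos.mpr (Nat.cast_pos.mpr (Fintype.card_pos_iff.mpr ⟨j⟩))
  have hm := h _ ⟨s, hs, rfl⟩
  rw [inner_unitSignVector, inv_mul_le_iff₀ hcard] at hm
  exact hsum.trans hm

theorem inner_unitSignVector_le_of_mem_demihypercube {s : ι → ℤˣ} (hs : ∏ i, s i ≠ 1)
    {a : EuclideanSpace ℝ ι} (ha : a ∈ demihypercube ι) :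
    ⟪unitSignVector s, a⟫ ≤ 1 - 2 / (Fintype.card ι : ℝ) := by
  obtain ⟨t, ht, rfl⟩ := ha
  exact inner_unitSignVector_le fun h ↦ hs (h ▸ ht)

variable [DecidableEq ι]

theorem ncard_crossPolytope : (crossPolytope ι).ncard = 2 * Fintype.card ι := by
  rw [crossPolytope, ← Set.image_univ, Set.ncard_image_of_injective _ single_units_injective,
    Set.ncard_univ]
  simp [mul_comm]

theorem disjoint_crossPolytope_demihypercube [Nontrivial ι] :
    Disjoint (crossPolytope ι) (demihypercube ι) := by
  rw [Set.disjoint_left]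
  rintro _ ⟨⟨j, u⟩, rfl⟩ ⟨s, -, h⟩
  obtain ⟨i, hij⟩ := exists_ne j
  have hi := congrArg (fun x : EuclideanSpace ℝ ι ↦ x i) h
  simp [hij] at hi

theorem crossPolytope_subset_sphere :
    crossPolytope ι ⊆ Metric.sphere (0 : EuclideanSpace ℝ ι) 1 := by
  rintro _ ⟨⟨j, u⟩, rfl⟩
  simp [abs_unit_intCast]

theorem abs_le_of_inner_crossPolytope_le {x : EuclideanSpace ℝ ι} {m : ℝ}
    (h : ∀ a ∈ crossPolytope ι, ⟪x, a⟫ ≤ m) (i : ι) : |x i| ≤ m := by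
  have hpos := h _ ⟨(i, 1), rfl⟩
  have hneg := h _ ⟨(i, -1), rfl⟩
  simp only [EuclideanSpace.inner_single_right] at hpos hneg
  exact abs_le'.mpr ⟨by simpa using hpos, by simpa using hneg⟩

theorem inner_unitSignVector_le_of_mem_crossPolytope (s : ι → ℤˣ) {a : EuclideanSpace ℝ ι}
    (ha : a ∈ crossPolytope ι) : ⟪unitSignVector s, a⟫ ≤ (√(Fintype.card ι))⁻¹ := by
  obtain ⟨⟨j, u⟩, rfl⟩ := ha
  calc ⟪unitSignVector s, EuclideanSpace.single j ((u : ℤ) : ℝ)⟫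
      ≤ |⟪unitSignVector s, EuclideanSpace.single j ((u : ℤ) : ℝ)⟫| := le_abs_self _
    _ = (√(Fintype.card ι))⁻¹ := by
      simp [EuclideanSpace.inner_single_right, abs_mul, abs_unit_intCast, abs_of_nonneg]

end Polytopes

section NormBound

theorem sum_three_sq_le_of_sum_le {a b c m : ℝ} (ha : 0 ≤ a) (hb : 0 ≤ b) (hc : 0 ≤ c)
    (ham : a ≤ m) (hbm : b ≤ m) (hcm : c ≤ m) (h : a + b + c ≤ 5 / 2 * m) :
    a ^ 2 + b ^ 2 + c ^ 2 ≤ 9 / 4 * m ^ 2 := by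
  have hm : 0 ≤ m := ha.trans ham
  rcases le_total (a + b + c) (3 / 2 * m) with hsum | hsum
  · calc a ^ 2 + b ^ 2 + c ^ 2 ≤ m * a + m * b + m * c := by
          simp only [sq]
          gcongr
      _ = m * (a + b + c) := by ring
      _ ≤ m * (3 / 2 * m) := by gcongr
      _ ≤ 9 / 4 * m ^ 2 := by linarith [sq_nonneg m]
  · have hpairs : 0 ≤ (m - a) * (m - b) + (m - b) * (m - c) + (m - c) * (m - a) := by
      rw [← sub_nonneg] at ham hbm hcm
      positivity
    have hexcess : (a + b + c - 2 * m) ^ 2 ≤ (1 / 2 * m) ^ 2 :=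
      sq_le_sq' (by linarith) (by linarith)
    calc a ^ 2 + b ^ 2 + c ^ 2 ≤ 2 * m ^ 2 + (a + b + c - 2 * m) ^ 2 := by linarith
      _ ≤ 2 * m ^ 2 + (1 / 2 * m) ^ 2 := by gcongr
      _ = 9 / 4 * m ^ 2 := by ring

theorem sum_three_sq_le_mul_sum_sq {a b c : ℝ} (hca : c ≤ 2 * a) (hcb : c ≤ 2 * b)
    (h : a + b ≤ 9 / 5 * c) : a ^ 2 + b ^ 2 + c ^ 2 ≤ 3 / 8 * (a + b + c) ^ 2 := by
  have hprod : 0 ≤ (2 * a - c) * (2 * b - c) :=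
    mul_nonneg (sub_nonneg.mpr hca) (sub_nonneg.mpr hcb)
  have hexcess : 0 ≤ (a + b - c) * (9 / 5 * c - (a + b)) :=
    mul_nonneg (by linarith) (sub_nonneg.mpr h)
  linarith

theorem sqrt_six_le_five_halves : √6 ≤ 5 / 2 := Real.sqrt_le_iff.mpr (by norm_num)

theorem sum_three_sq_le_of_sum_le_sqrt_six_mul {a b c m : ℝ} (hc : 0 ≤ c) (hca : c ≤ 2 * a)
    (hcb : c ≤ 2 * b) (ham : a ≤ m) (hbm : b ≤ m) (h : a + b + c ≤ √6 * m) :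
    a ^ 2 + b ^ 2 + c ^ 2 ≤ 9 / 4 * m ^ 2 := by
  have hm : 0 ≤ m := by linarith
  have hsum : a + b + c ≤ 5 / 2 * m := h.trans (by gcongr; exact sqrt_six_le_five_halves)
  rcases le_total c m with hcm | hcm
  · exact sum_three_sq_le_of_sum_le (by linarith) (by linarith) hc ham hbm hcm hsum
  · calc a ^ 2 + b ^ 2 + c ^ 2 ≤ 3 / 8 * (a + b + c) ^ 2 :=
          sum_three_sq_le_mul_sum_sq hca hcb (by linarith)
      _ ≤ 3 / 8 * (√6 * m) ^ 2 := by
        gcongr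
        linarith
      _ = 9 / 4 * m ^ 2 := by
        rw [mul_pow, Real.sq_sqrt (by norm_num)]
        ring

theorem sum_four_sq_le_sq_alternating {a b c d : ℝ} (hd : 0 ≤ d) (hdc : d ≤ c) (hcb : c ≤ b)
    (hba : b ≤ a) : a ^ 2 + b ^ 2 + c ^ 2 + d ^ 2 ≤ (a + b + c - d) ^ 2 := by
  have hacd : 0 ≤ a * (c - d) := mul_nonneg (by linarith) (by linarith)
  have hbad : 0 ≤ b * (a - d) := mul_nonneg (by linarith) (by linarith)
  have hcbd : 0 ≤ c * (b - d) := mul_nonneg (by linarith) (by linarith)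
  linarith

theorem sum_sq_le_of_monotone {y : Fin 6 → ℝ} {m : ℝ} (hy : Monotone y) (hy0 : 0 ≤ y 0)
    (hym : y 5 ≤ m) (h : ∑ i, y i - 2 * y 0 ≤ √6 * m) : ∑ i, y i ^ 2 ≤ 9 / 4 * m ^ 2 := by
  have h01 : y 0 ≤ y 1 := hy (by decide)
  have h12 : y 1 ≤ y 2 := hy (by decide)
  have h23 : y 2 ≤ y 3 := hy (by decide)
  have h34 : y 3 ≤ y 4 := hy (by decide)
  have h45 : y 4 ≤ y 5 := hy (by decide)
  -- Replacing the four smallest entries by the single entry `t` reduces the bound to three entries.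
  set t := min (y 3 + y 2 + y 1 - y 0) (2 * y 3) with ht
  have ht0 : 0 ≤ t := le_min (by linarith) (by linarith)
  have ht_le : t ≤ 2 * y 3 := min_le_right _ _
  have hsq : y 3 ^ 2 + y 2 ^ 2 + y 1 ^ 2 + y 0 ^ 2 ≤ t ^ 2 := by
    rcases min_choice (y 3 + y 2 + y 1 - y 0) (2 * y 3) with hmin | hmin
    · rw [ht, hmin]
      exact sum_four_sq_le_sq_alternating hy0 h01 h12 h23
    · rw [ht, hmin]
      calc y 3 ^ 2 + y 2 ^ 2 + y 1 ^ 2 + y 0 ^ 2 ≤ y 3 ^ 2 + y 3 ^ 2 + y 3 ^ 2 + y 3 ^ 2 := by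
            gcongr <;> linarith
        _ = (2 * y 3) ^ 2 := by ring
  have hsum : y 5 + y 4 + t ≤ √6 * m := by
    have ht_le_sum : t ≤ y 3 + y 2 + y 1 - y 0 := min_le_left _ _
    rw [Fin.sum_univ_six] at h
    linarith
  have hthree : y 5 ^ 2 + y 4 ^ 2 + t ^ 2 ≤ 9 / 4 * m ^ 2 :=
    sum_three_sq_le_of_sum_le_sqrt_six_mul ht0 (by linarith) (by linarith) hym (by linarith) hsum
  rw [Fin.sum_univ_six]
  linarith

theorem sum_sq_le_of_sum_sub_le {y : Fin 6 → ℝ} {m : ℝ} (hy0 : ∀ i, 0 ≤ y i) (hym : ∀ i, y i ≤ m)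
    (h : ∀ j, ∑ i, y i - 2 * y j ≤ √6 * m) : ∑ i, y i ^ 2 ≤ 9 / 4 * m ^ 2 := by
  let σ := Tuple.sort y
  rw [← Equiv.sum_comp σ]
  refine sum_sq_le_of_monotone (y := y ∘ σ) (Tuple.monotone_sort y) (hy0 _) (hym _) ?_
  simpa only [Function.comp_apply, Equiv.sum_comp σ y] using h (σ 0)

theorem norm_le_of_inner_vertices_le {x : EuclideanSpace ℝ (Fin 6)} {m : ℝ}
    (h : ∀ a ∈ crossPolytope (Fin 6) ∪ demihypercube (Fin 6), ⟪x, a⟫ ≤ m) :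
    ‖x‖ ≤ 3 / 2 * m := by
  have habs : ∀ i, |x i| ≤ m := abs_le_of_inner_crossPolytope_le fun a ha ↦ h a (.inl ha)
  have hsum (j : Fin 6) : ∑ i, |x i| - 2 * |x j| ≤ √6 * m := by
    simpa using sum_abs_sub_le_of_inner_demihypercube_le (fun a ha ↦ h a (.inr ha)) j
  have hm : 0 ≤ m := (abs_nonneg _).trans (habs 0)
  refine (sq_le_sq₀ (norm_nonneg x) (by positivity)).mp ?_
  calc ‖x‖ ^ 2 = ∑ i, |x i| ^ 2 := by simp [EuclideanSpace.real_norm_sq_eq]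
    _ ≤ 9 / 4 * m ^ 2 := sum_sq_le_of_sum_sub_le (fun i ↦ abs_nonneg (x i)) habs hsum
    _ = (3 / 2 * m) ^ 2 := by ring

end NormBound

section Configuration

/-- The coordinate signs of the generating vector `(1,1,1,1,-1,-1)`. -/
def pairSign : Fin 6 → ℤˣ := fun i ↦ if i.val < 4 then 1 else -1

theorem exists_perm_of_prod_eq_one {s : Fin 6 → ℤˣ} (hs : ∏ i, s i = 1) :
    ∃ (u : ℤˣ) (σ : Equiv.Perm (Fin 6)), (∀ i, s i = u) ∨ ∀ i, s i = u * pairSign (σ i) := by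
  wlog hle : Finset.card {i | s i = -1} ≤ 3 generalizing s
  · have hcompl := Finset.card_filter_add_card_filter_not (s := Finset.univ) (fun i ↦ s i = -1)
    have hneg (i : Fin 6) : (-s) i = -1 ↔ ¬s i = -1 := by
      rcases Int.units_eq_one_or (s i) with h | h <;> simp [h]
    have hprod : ∏ i, (-s) i = 1 := by simpa [Finset.prod_neg, (by decide : Even 6)] using hs
    have hcard : Finset.card {i | (-s) i = -1} ≤ 3 := by
      simp only [hneg]
      rw [Finset.card_univ, Fintype.card_fin] at hcompl
      lia
    obtain ⟨u, σ, h⟩ := this hprod hcard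
    exact ⟨-u, σ, by simpa [neg_eq_iff_eq_neg] using h⟩
  have heven : Even (Finset.card {i | s i = -1}) := by
    rwa [prod_units_eq_neg_one_pow, neg_one_pow_eq_one_iff_even (by decide)] at hs
  obtain hzero | htwo : Finset.card {i | s i = -1} = 0 ∨ Finset.card {i | s i = -1} = 2 := by
    grind
  · refine ⟨1, 1, .inl fun i ↦ (Int.units_eq_one_or _).resolve_right ?_⟩
    exact Finset.filter_eq_empty_iff.mp (Finset.card_eq_zero.mp hzero) (Finset.mem_univ i)
  · obtain ⟨σ, rfl⟩ := exists_perm_comp_eq (t := pairSign) (htwo.trans (by decide))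
    exact ⟨1, σ, .inr fun i ↦ (one_mul _).symm⟩

theorem eq_single_iff_forall_eq_gen6_zero (x : EuclideanSpace ℝ (Fin 6)) (u : ℤˣ)
    (σ : Equiv.Perm (Fin 6)) :
    x = EuclideanSpace.single (σ.symm 0) ((u : ℤ) : ℝ) ↔
      ∀ i, x i = (√6)⁻¹ * (((u : ℤ) : ℝ) * gen6 0 (σ i)) := by
  have hcoord (i : Fin 6) : EuclideanSpace.single (σ.symm 0) ((u : ℤ) : ℝ) i =
      (√6)⁻¹ * (((u : ℤ) : ℝ) * gen6 0 (σ i)) := by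
    by_cases hi : i = σ.symm 0
    · simp [hi, gen6, mul_comm]
    · simp [hi, gen6, mt (Equiv.eq_symm_apply σ).mpr hi]
  simp only [PiLp.ext_iff, hcoord]

theorem eq_unitSignVector_const_iff_forall_eq_gen6_one (x : EuclideanSpace ℝ (Fin 6)) (u : ℤˣ)
    (σ : Equiv.Perm (Fin 6)) :
    x = unitSignVector (fun _ ↦ u) ↔
      ∀ i, x i = (√6)⁻¹ * (((u : ℤ) : ℝ) * gen6 1 (σ i)) := by
  simp [PiLp.ext_iff, gen6]

theorem eq_unitSignVector_pairSign_iff_forall_eq_gen6_two (x : EuclideanSpace ℝ (Fin 6)) (u : ℤˣ)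
    (σ : Equiv.Perm (Fin 6)) :
    x = unitSignVector (fun i ↦ u * pairSign (σ i)) ↔
      ∀ i, x i = (√6)⁻¹ * (((u : ℤ) : ℝ) * gen6 2 (σ i)) := by
  have hgen (i : Fin 6) : gen6 2 i = ((pairSign i : ℤ) : ℝ) := by
    simp only [gen6, Matrix.cons_val, pairSign]
    split_ifs <;> simp
  simp [PiLp.ext_iff, hgen]

theorem mem_A6_iff {x : EuclideanSpace ℝ (Fin 6)} :
    x ∈ A6 ↔ ∃ (u : ℤˣ) (σ : Equiv.Perm (Fin 6)),
      x = EuclideanSpace.single (σ.symm 0) ((u : ℤ) : ℝ) ∨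
      x = unitSignVector (fun _ ↦ u) ∨
      x = unitSignVector (fun i ↦ u * pairSign (σ i)) := by
  constructor
  · rintro ⟨k, σ, ε, hε, hx⟩
    obtain ⟨u, rfl⟩ : ∃ u : ℤˣ, ((u : ℤ) : ℝ) = ε := by
      rcases hε with rfl | rfl
      · exact ⟨1, by simp⟩
      · exact ⟨-1, by simp⟩
    refine ⟨u, σ, ?_⟩
    fin_cases k
    · exact .inl ((eq_single_iff_forall_eq_gen6_zero x u σ).mpr hx)
    · exact .inr (.inl ((eq_unitSignVector_const_iff_forall_eq_gen6_one x u σ).mpr hx))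
    · exact .inr (.inr ((eq_unitSignVector_pairSign_iff_forall_eq_gen6_two x u σ).mpr hx))
  · have hcast (u : ℤˣ) : ((u : ℤ) : ℝ) = 1 ∨ ((u : ℤ) : ℝ) = -1 := by
      rcases Int.units_eq_one_or u with rfl | rfl <;> simp
    rintro ⟨u, σ, hx | hx | hx⟩
    · exact ⟨0, σ, _, hcast u, (eq_single_iff_forall_eq_gen6_zero x u σ).mp hx⟩
    · exact ⟨1, σ, _, hcast u, (eq_unitSignVector_const_iff_forall_eq_gen6_one x u σ).mp hx⟩
    · exact ⟨2, σ, _, hcast u, (eq_unitSignVector_pairSign_iff_forall_eq_gen6_two x u σ).mp hx⟩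

theorem A6_eq_union : A6 = crossPolytope (Fin 6) ∪ demihypercube (Fin 6) := by
  ext x
  rw [mem_A6_iff]
  constructor
  · rintro ⟨u, σ, rfl | rfl | rfl⟩
    · exact .inl ⟨(σ.symm 0, u), rfl⟩
    · refine .inr ⟨_, ?_, rfl⟩
      rcases Int.units_eq_one_or u with rfl | rfl <;> decide
    · refine .inr ⟨_, ?_, rfl⟩
      rw [Set.mem_ofPred_eq, Equiv.prod_comp σ fun i ↦ u * pairSign i]
      rcases Int.units_eq_one_or u with rfl | rfl <;> decide
  · rintro (⟨⟨j, u⟩, rfl⟩ | ⟨s, hs, rfl⟩)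
    · exact ⟨u, Equiv.swap 0 j, .inl (by simp)⟩
    · obtain ⟨u, σ, h | h⟩ := exists_perm_of_prod_eq_one hs
      · exact ⟨u, σ, .inr (.inl (congrArg _ (funext h)))⟩
      · exact ⟨u, σ, .inr (.inr (congrArg _ (funext h)))⟩

theorem A6_ncard : A6.ncard = 44 := by
  have hdemi := two_mul_ncard_demihypercube (ι := Fin 6)
  rw [A6_eq_union, Set.ncard_union_eq disjoint_crossPolytope_demihypercube (Set.finite_range _)
    ((Set.toFinite _).image _), ncard_crossPolytope]
  simp only [Fintype.card_fin] at hdemi ⊢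
  lia

theorem neg_A6 : -A6 = A6 := by
  refine Set.neg_eq_self_iff_neg_subset.mpr fun x hx ↦ ?_
  obtain ⟨k, σ, ε, hε, h⟩ := Set.mem_neg.mp hx
  refine ⟨k, σ, -ε, ?_, fun i ↦ ?_⟩
  · rcases hε with rfl | rfl <;> simp
  · simpa [neg_eq_iff_eq_neg] using h i

theorem A6_subset_sphere : A6 ⊆ Metric.sphere (0 : EuclideanSpace ℝ (Fin 6)) 1 :=
  A6_eq_union ▸ Set.union_subset crossPolytope_subset_sphere demihypercube_subset_sphere

theorem exists_mem_A6_le_inner (x : EuclideanSpace ℝ (Fin 6)) :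
    ∃ a ∈ A6, 2 / 3 * ‖x‖ ≤ ⟪x, a⟫ := by
  have hA6 : 0 < A6.ncard := by rw [A6_ncard]; norm_num
  obtain ⟨a, ha, hmax⟩ := Set.exists_max_image A6 (fun a ↦ ⟪x, a⟫) (Set.finite_of_ncard_pos hA6)
    (Set.nonempty_of_ncard_ne_zero hA6.ne')
  have hnorm : ‖x‖ ≤ 3 / 2 * ⟪x, a⟫ := norm_le_of_inner_vertices_le (A6_eq_union ▸ hmax)
  exact ⟨a, ha, by linarith⟩

theorem inner_unitSignVector_le_of_mem_A6 {s : Fin 6 → ℤˣ} (hs : ∏ i, s i ≠ 1)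
    {a : EuclideanSpace ℝ (Fin 6)} (ha : a ∈ A6) : ⟪unitSignVector s, a⟫ ≤ 2 / 3 := by
  rw [A6_eq_union] at ha
  rcases ha with ha | ha
  · have hsqrt : 3 / 2 ≤ √(Fintype.card (Fin 6) : ℝ) := Real.le_sqrt_of_sq_le (by norm_num)
    calc ⟪unitSignVector s, a⟫ ≤ (√(Fintype.card (Fin 6)))⁻¹ :=
          inner_unitSignVector_le_of_mem_crossPolytope s ha
      _ ≤ (3 / 2)⁻¹ := inv_anti₀ (by norm_num) hsqrt
      _ = 2 / 3 := by norm_num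
  · calc ⟪unitSignVector s, a⟫ ≤ 1 - 2 / (Fintype.card (Fin 6) : ℝ) :=
          inner_unitSignVector_le_of_mem_demihypercube hs ha
      _ = 2 / 3 := by norm_num

theorem covRadius_A6 : covRadius A6 = Real.arccos (2 / 3) := by
  have hodd : ∏ i, Pi.mulSingle (M := fun _ : Fin 6 ↦ ℤˣ) 0 (-1) i ≠ 1 := by decide
  refine covRadius_eq_arccos (by norm_num) (fun x hx ↦ ?_)
    (mem_sphere_zero_iff_norm.mpr (norm_unitSignVector _))
    fun a ↦ inner_unitSignVector_le_of_mem_A6 hodd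
  simpa [mem_sphere_zero_iff_norm.mp hx] using exists_mem_A6_le_inner x

end Configuration

theorem dim6_covering : A6.ncard = 44 ∧
    -A6 = A6 ∧
    A6 ⊆ Metric.sphere (0 : EuclideanSpace ℝ (Fin 6)) 1 ∧
    covRadius A6 = Real.arccos (2 / 3) ∧
    Real.arccos (2 / 3) < Real.arccos (Real.sqrt (5 / 12)) := by
  refine ⟨A6_ncard, neg_A6, A6_subset_sphere, covRadius_A6, ?_⟩
  have hlt : √(5 / 12) < 2 / 3 := (Real.sqrt_lt' (by norm_num)).mpr (by norm_num)
  exact Real.arccos_lt_arccos (by linarith [Real.sqrt_nonneg (5 / 12)]) hlt (by norm_num)
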